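/- arXiv:2205.02145 — 2 statements merged into one kernel-verified Lean document; each statement's English description precedes it below -/
import Mathlib

section
/- Let α : ℕ → (0, ∞) be an increasing function with α(n) → ∞ as n → ∞. Then there exists a set S ⊆ ℕ such that |S ∩ [1,n]| = o(α(n)·n/log n) as n → ∞, and such that for every β > 1 the inequality lcm{i : i ≤ n, i ∉ S} > β^n holds for only finitely many n. -/
/-!
Put `g = √α` and let `S` be the set of integers `p * k` with `p` prime and `k ≤ g (p * k)`, that is,
the integers having an unusually large prime factor.

*Sparsity.* Since `g` is increasing, `S ∩ [1,n]` has at most `π(n) · g(n) = O(g(n) n / log n)`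
elements, by Chebyshev's upper bound for `π`, and `g = o(α)`.

*Small lcm.* If `i ≤ n` is not in `S` and `p ∣ i`, then either `p ≤ i ≤ √n`, or `p < n / g(√n)`
because the cofactor `i / p` exceeds `g(i) ≥ g(√n)`. So the lcm has at most `π(√n + n / g(√n))`
prime factors, each contributing at most a factor `n`. Its logarithm is therefore at most
`π(√n + n / g(√n)) log n = O(√n log n + n / g(√n)) = o(n)`.

Both parts use Chebyshev's bound in the uniform form
`π(x) log n ≤ √n log n + 2 log 4 · x` (`primeCounting_mul_log_le`).
-/

open Filter

open Classical in
/-- `lcm { i : 1 ≤ i ≤ n, i ∉ S }`. -/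
noncomputable def lcmIdOutside (S : Set ℕ) (n : ℕ) : ℕ :=
  (Finset.Icc 1 n).lcm (fun i => if i ∈ S then 1 else i)

/-- A form of Chebyshev's upper bound with no relation between `x` and `n`: at most `√n` primes are
below `√n`, and every other prime up to `x` contributes at least `log n / 2` to `θ x ≤ log 4 · x`. -/
lemma primeCounting_mul_log_le (n m : ℕ) (hn : 1 ≤ n) :
    ((Nat.primesLE m).card : ℝ) * Real.log n ≤ √n * Real.log n + 2 * Real.log 4 * m := by
  have hlog : 0 ≤ Real.log n := Real.log_natCast_nonneg n
  have hsplit := Finset.card_filter_add_card_filter_not (s := Nat.primesLE m)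
    (fun p : ℕ => (p : ℝ) ≤ √n)
  have h1 : (((Nat.primesLE m).filter (fun p : ℕ => (p : ℝ) ≤ √n)).card : ℝ) ≤ √n := by
    have : (Nat.primesLE m).filter (fun p : ℕ => (p : ℝ) ≤ √n) ⊆ Finset.Icc 1 ⌊√(n : ℝ)⌋₊ := by
      intro p hp
      simp only [Finset.mem_filter, Nat.mem_primesLE] at hp
      exact Finset.mem_Icc.2 ⟨hp.1.2.one_le, Nat.le_floor hp.2⟩
    have h := Finset.card_le_card this
    rw [Nat.card_Icc, Nat.add_sub_cancel] at h
    exact (Nat.cast_le.2 h).trans (Nat.floor_le (Real.sqrt_nonneg _))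
  have h2 : (((Nat.primesLE m).filter (fun p : ℕ => ¬ (p : ℝ) ≤ √n)).card : ℝ) *
      (Real.log n / 2) ≤ Real.log 4 * m := by
    calc _ = ∑ p ∈ (Nat.primesLE m).filter (fun p : ℕ => ¬ (p : ℝ) ≤ √n), Real.log n / 2 := by
          rw [Finset.sum_const, nsmul_eq_mul]
      _ ≤ ∑ p ∈ (Nat.primesLE m).filter (fun p : ℕ => ¬ (p : ℝ) ≤ √n), Real.log p := by
          refine Finset.sum_le_sum fun p hp => ?_
          rw [← Real.log_sqrt (Nat.cast_nonneg n)]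
          refine Real.log_le_log (Real.sqrt_pos.2 (by exact_mod_cast hn)) ?_
          exact (not_le.1 (Finset.mem_filter.1 hp).2).le
      _ ≤ ∑ p ∈ Nat.primesLE m, Real.log p :=
          Finset.sum_le_sum_of_subset_of_nonneg (Finset.filter_subset _ _)
            fun p _ _ => Real.log_natCast_nonneg p
      _ = Chebyshev.theta m := (Chebyshev.theta_eq_sum_primesLE_log m).symm
      _ ≤ _ := Chebyshev.theta_le_log4_mul_x (Nat.cast_nonneg m)
  have h3 := mul_le_mul_of_nonneg_right h1 hlog
  rw [← hsplit]
  push_cast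
  linarith

/-- If all prime factors of the elements of `[1,n] \ S` are at most `m`, then the lcm divides
`∏_{p ≤ m} p ^ ⌊log_p n⌋ ≤ n ^ π(m)`. -/
lemma lcmIdOutside_le_pow (S : Set ℕ) (n m : ℕ) (hn : 1 ≤ n)
    (h : ∀ i, 1 ≤ i → i ≤ n → i ∉ S → ∀ p, p.Prime → p ∣ i → p ≤ m) :
    lcmIdOutside S n ≤ n ^ (Nat.primesLE m).card := by
  have hpos : 0 < ∏ p ∈ Nat.primesLE m, p ^ Nat.log p n :=
    Finset.prod_pos fun p hp => pow_pos (Nat.mem_primesLE.1 hp).2.pos _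
  have hdvd : lcmIdOutside S n ∣ ∏ p ∈ Nat.primesLE m, p ^ Nat.log p n := by
    refine Finset.lcm_dvd fun i hi => ?_
    obtain ⟨hi1, hin⟩ := Finset.mem_Icc.1 hi
    split_ifs with hS
    · exact one_dvd _
    have hi0 : i ≠ 0 := by omega
    conv_lhs => rw [← Nat.prod_factorization_pow_eq_self hi0]
    have hsub : i.primeFactors ⊆ Nat.primesLE m := fun p hp => by
      have hp' := Nat.mem_primeFactors.1 hp
      exact Nat.mem_primesLE.2 ⟨h i hi1 hin hS p hp'.1 hp'.2.1, hp'.1⟩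
    refine (Finset.prod_dvd_prod_of_dvd _ (fun p => p ^ Nat.log p n) fun p hp => ?_).trans
      (Finset.prod_dvd_prod_of_subset _ _ _ hsub)
    have hp' := Nat.mem_primeFactors.1 hp
    exact pow_dvd_pow p (Nat.le_log_of_pow_le hp'.1.one_lt
      ((Nat.le_of_dvd (by omega) (Nat.ordProj_dvd i p)).trans hin))
  refine (Nat.le_of_dvd hpos hdvd).trans ?_
  exact Finset.prod_le_pow_card _ _ _ fun p _ => Nat.pow_log_le_self p (by omega)

/-- The integers `p * k` with `p` prime and cofactor `k ≤ √(α (p * k))`. -/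
def largePrimeFactorSet (α : ℕ → ℝ) : Set ℕ :=
  {i | ∃ p k : ℕ, p.Prime ∧ i = p * k ∧ (k : ℝ) ≤ √(α i)}

lemma ncard_largePrimeFactorSet_le (α : ℕ → ℝ) (hmono : Monotone α) (n : ℕ) :
    ((largePrimeFactorSet α ∩ Set.Icc 1 n).ncard : ℝ) ≤ (Nat.primesLE n).card * √(α n) := by
  have hsub : largePrimeFactorSet α ∩ Set.Icc 1 n ⊆
      (((Nat.primesLE n ×ˢ Finset.Icc 1 ⌊√(α n)⌋₊).image fun q => q.1 * q.2 : Finset ℕ) :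
        Set ℕ) := by
    rintro i ⟨⟨p, k, hp, rfl, hk⟩, h1, hn⟩
    have hk0 : 0 < k := Nat.pos_of_mul_pos_left h1
    refine Finset.mem_coe.2 (Finset.mem_image.2 ⟨(p, k), ?_, rfl⟩)
    refine Finset.mem_product.2 ⟨Nat.mem_primesLE.2 ⟨(Nat.le_mul_of_pos_right p hk0).trans hn, hp⟩,
      Finset.mem_Icc.2 ⟨hk0, Nat.le_floor (hk.trans (Real.sqrt_le_sqrt (hmono hn)))⟩⟩
  have h := Set.ncard_le_ncard hsub (Finset.finite_toSet _)
  rw [Set.ncard_coe_finset] at h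
  replace h := h.trans Finset.card_image_le
  rw [Finset.card_product, Nat.card_Icc, Nat.add_sub_cancel] at h
  calc _ ≤ (((Nat.primesLE n).card * ⌊√(α n)⌋₊ : ℕ) : ℝ) := Nat.cast_le.2 h
    _ ≤ _ := by
      push_cast
      exact mul_le_mul_of_nonneg_left (Nat.floor_le (Real.sqrt_nonneg _)) (Nat.cast_nonneg _)

lemma log_lcmIdOutside_le (α : ℕ → ℝ) (hpos : ∀ n, 0 < α n) (hmono : Monotone α) (n : ℕ)
    (hn : 1 ≤ n) :
    Real.log (lcmIdOutside (largePrimeFactorSet α) n) ≤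
      √n * Real.log n + 2 * Real.log 4 * (√n + n / √(α n.sqrt)) := by
  have hg : 0 < √(α n.sqrt) := Real.sqrt_pos.2 (hpos _)
  set x : ℝ := √n + n / √(α n.sqrt) with hx
  have hx0 : 0 ≤ x := by positivity
  have hle := lcmIdOutside_le_pow (largePrimeFactorSet α) n ⌊x⌋₊ hn (by
    rintro i hi1 hin hS p hp ⟨k, rfl⟩
    refine Nat.le_floor ?_
    have hk0 : 0 < k := Nat.pos_of_mul_pos_left hi1
    have hd : 0 ≤ (n : ℝ) / √(α n.sqrt) := by positivity
    rcases le_total (p * k) n.sqrt with hs | hs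
    · have h1 : (p : ℝ) ≤ (n.sqrt : ℝ) := by
        exact_mod_cast (Nat.le_mul_of_pos_right p hk0).trans hs
      have h2 : (n.sqrt : ℝ) ≤ √n := Real.nat_sqrt_le_real_sqrt
      linarith
    · have hk : √(α (p * k)) < k := by
        by_contra hc
        exact hS ⟨p, k, hp, rfl, not_lt.1 hc⟩
      have hk' : √(α n.sqrt) ≤ k := (Real.sqrt_le_sqrt (hmono hs)).trans hk.le
      have h1 : (p : ℝ) ≤ n / √(α n.sqrt) := by
        rw [le_div_iff₀ hg]
        calc (p : ℝ) * √(α n.sqrt) ≤ p * k := by gcongr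
          _ ≤ n := by exact_mod_cast hin
      linarith [Real.sqrt_nonneg (n : ℝ)])
  have hlog4 : 0 ≤ Real.log 4 := Real.log_nonneg (by norm_num)
  calc Real.log (lcmIdOutside (largePrimeFactorSet α) n)
      ≤ Real.log ((n : ℝ) ^ (Nat.primesLE ⌊x⌋₊).card) := by
        rcases Nat.eq_zero_or_pos (lcmIdOutside (largePrimeFactorSet α) n) with h0 | h0
        · rw [h0, Nat.cast_zero, Real.log_zero, Real.log_pow]
          exact mul_nonneg (Nat.cast_nonneg _) (Real.log_natCast_nonneg n)
        · exact Real.log_le_log (by exact_mod_cast h0) (by exact_mod_cast hle)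
    _ = (Nat.primesLE ⌊x⌋₊).card * Real.log n := Real.log_pow _ _
    _ ≤ √n * Real.log n + 2 * Real.log 4 * ⌊x⌋₊ := primeCounting_mul_log_le n _ hn
    _ ≤ _ := by
      have := Nat.floor_le hx0
      gcongr

lemma tendsto_log_div_sqrt : Tendsto (fun n : ℕ => Real.log n / √n) atTop (nhds 0) := by
  have h := (isLittleO_log_rpow_atTop (r := 1 / 2) (by norm_num)).tendsto_div_nhds_zero
  refine (h.comp tendsto_natCast_atTop_atTop).congr fun n => ?_
  simp [Real.sqrt_eq_rpow]

/-- Let `α : ℕ → (0, ∞)` be increasing with `α(n) → ∞`. Then there is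
a set `S ⊆ ℕ` with `|S ∩ [1,n]| = o(α(n) n / log n)` such that for every `β > 1` the
inequality `lcm{i : i ≤ n, i ∉ S} > βⁿ` holds for only finitely many `n`. -/
theorem exists_sparse_set_with_small_lcm
    (α : ℕ → ℝ) (hpos : ∀ n, 0 < α n) (hmono : Monotone α)
    (htends : Filter.Tendsto α Filter.atTop Filter.atTop) :
    ∃ S : Set ℕ,
      Filter.Tendsto
        (fun n : ℕ => ((S ∩ Set.Icc 1 n).ncard : ℝ) * Real.log n / (α n * n))
        Filter.atTop (nhds 0) ∧
      ∀ β : ℝ, 1 < β → {n : ℕ | β ^ n < (lcmIdOutside S n : ℝ)}.Finite := by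
  have hg : Tendsto (fun n => √(α n)) atTop atTop := Real.tendsto_sqrt_atTop.comp htends
  have hginv : Tendsto (fun n => (√(α n))⁻¹) atTop (nhds 0) := tendsto_inv_atTop_zero.comp hg
  have hsqrt : Tendsto Nat.sqrt atTop atTop :=
    tendsto_atTop_atTop.2 fun b => ⟨b * b, fun n hn => Nat.le_sqrt.2 hn⟩
  have hrt : Tendsto (fun n : ℕ => (√(n : ℝ))⁻¹) atTop (nhds 0) :=
    tendsto_inv_atTop_zero.comp (Real.tendsto_sqrt_atTop.comp tendsto_natCast_atTop_atTop)
  refine ⟨largePrimeFactorSet α, ?_, fun β hβ => ?_⟩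
  · have hlim : Tendsto (fun n : ℕ => (Real.log n / √n + 2 * Real.log 4) * (√(α n))⁻¹)
        atTop (nhds 0) := by
      simpa using (tendsto_log_div_sqrt.add_const (2 * Real.log 4)).mul hginv
    refine squeeze_zero' (Eventually.of_forall fun n => ?_) ?_ hlim
    · have := hpos n
      have := Real.log_natCast_nonneg n
      positivity
    · filter_upwards [eventually_ge_atTop 1] with n hn
      have hn0 : (0 : ℝ) < n := by exact_mod_cast hn
      have hr : 0 < √(n : ℝ) := Real.sqrt_pos.2 hn0
      have ha : 0 < √(α n) := Real.sqrt_pos.2 (hpos n)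
      have hαn := hpos n
      rw [div_le_iff₀ (by positivity)]
      calc ((largePrimeFactorSet α ∩ Set.Icc 1 n).ncard : ℝ) * Real.log n
          ≤ (Nat.primesLE n).card * √(α n) * Real.log n :=
            mul_le_mul_of_nonneg_right (ncard_largePrimeFactorSet_le α hmono n)
              (Real.log_natCast_nonneg n)
        _ = ((Nat.primesLE n).card * Real.log n) * √(α n) := by ring
        _ ≤ (√n * Real.log n + 2 * Real.log 4 * n) * √(α n) :=
            mul_le_mul_of_nonneg_right (primeCounting_mul_log_le n n hn) ha.le
        _ = (Real.log n / √n + 2 * Real.log 4) * (√(α n))⁻¹ *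
              ((√(α n) * √(α n)) * (√(n : ℝ) * √n)) := by
            rw [show √(n : ℝ) * Real.log n + 2 * Real.log 4 * n =
              √(n : ℝ) * Real.log n + 2 * Real.log 4 * (√(n : ℝ) * √n) by
                rw [Real.mul_self_sqrt hn0.le]]
            field_simp
        _ = _ := by rw [Real.mul_self_sqrt hn0.le, Real.mul_self_sqrt hαn.le]
  · have hlim : Tendsto (fun n : ℕ => Real.log n / √n + 2 * Real.log 4 *
        ((√(n : ℝ))⁻¹ + (√(α n.sqrt))⁻¹)) atTop (nhds 0) := by
      simpa using tendsto_log_div_sqrt.add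
        ((hrt.add (hginv.comp hsqrt)).const_mul (2 * Real.log 4))
    have hev : ∀ᶠ n : ℕ in atTop, ¬ β ^ n < (lcmIdOutside (largePrimeFactorSet α) n : ℝ) := by
      filter_upwards [eventually_ge_atTop 1, hlim.eventually_lt_const (Real.log_pos hβ)]
        with n hn hlt hc
      have hn0 : (0 : ℝ) < n := by exact_mod_cast hn
      have hr : 0 < √(n : ℝ) := Real.sqrt_pos.2 hn0
      have ha : 0 < √(α n.sqrt) := Real.sqrt_pos.2 (hpos _)
      have h1 := Real.log_lt_log (by positivity) hc
      rw [Real.log_pow] at h1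
      have h2 := log_lcmIdOutside_le α hpos hmono n hn
      have h3 := mul_lt_mul_of_pos_left hlt hn0
      have h4 : (n : ℝ) * (Real.log n / √n + 2 * Real.log 4 *
          ((√(n : ℝ))⁻¹ + (√(α n.sqrt))⁻¹)) =
          √n * Real.log n + 2 * Real.log 4 * (√n + n / √(α n.sqrt)) := by
        have h5 : (n : ℝ) * (√(n : ℝ))⁻¹ = √n := by
          rw [← div_eq_mul_inv, Real.div_sqrt]
        linear_combination (Real.log n + 2 * Real.log 4) * h5
      linarith
    rw [← Nat.cofinite_eq_atTop, eventually_cofinite] at hev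
    simpa using hev
end

section
/- Let K be a number field with ring of integers 𝒪, and let A, B ∈ 𝒪[z] be polynomials that are coprime in K[z], with B nonconstant. Then there is a constant c > 0 such that for all sufficiently large positive integers n (in particular with B(n) ≠ 0), den(A(n)/B(n)) ≥ c · n^{deg B}. -/
/-!
A Bézout identity with cleared denominators, `U A + V B = r` with `U, V ∈ 𝒪[z]` and `0 ≠ r ∈ 𝒪`,
shows that whenever `d A(n) / B(n)` is integral, `B(n)` divides `d r` in `𝒪`, say
`d r = B(n) s` with `s ≠ 0`. The norm of `s` is a nonzero integer, so some infinite place `w`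
has `w s ≥ 1`, whence `d * w r ≥ w (B(n))`. At every infinite place `w (B(n))` is eventually at
least a positive multiple of `n ^ deg B` (`eventually_le_place_eval`), and there are only finitely
many places, so the smallest of the resulting constants works.
-/

open Polynomial NumberField

/-- The denominator of an algebraic number `α ∈ K`: the smallest positive integer `d`
such that `d α` is an algebraic integer. -/
noncomputable def den (K : Type*) [Field K] [NumberField K] (α : K) : ℕ :=
  sInf {d : ℕ | 0 < d ∧ IsIntegral ℤ ((d : K) * α)}

open Filter Topology

/-- The infimum defining `den` is attained: an algebraic number has a positive integer multiple
that is integral, so the junk value `sInf ∅ = 0` does not occur. -/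
lemma den_spec (K : Type*) [Field K] [NumberField K] (α : K) :
    0 < den K α ∧ IsIntegral ℤ ((den K α : K) * α) := by
  refine Nat.sInf_mem (s := {d : ℕ | 0 < d ∧ IsIntegral ℤ ((d : K) * α)}) ?_
  have hα : IsAlgebraic ℤ α :=
    (IsFractionRing.isAlgebraic_iff ℤ ℚ K).mpr (Algebra.IsAlgebraic.isAlgebraic α)
  obtain ⟨y, hy, hint⟩ := hα.exists_integral_multiple
  refine ⟨y.natAbs, Int.natAbs_pos.mpr hy, ?_⟩
  rw [zsmul_eq_mul] at hint
  rcases Int.natAbs_eq y with h | h <;> rw [h] at hint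
  · simpa using hint
  · simpa using hint.neg

/-- With `m = deg P`, the quotient `P(n) / n ^ m` is the value of the reversed polynomial
at `1 / n`, which tends to the leading coefficient of `P`. -/
lemma eventually_le_norm_eval (P : ℂ[X]) (hP : P ≠ 0) :
    ∃ c : ℝ, 0 < c ∧ ∀ᶠ n : ℕ in atTop, c * (n : ℝ) ^ P.natDegree ≤ ‖P.eval (n : ℂ)‖ := by
  have hl : 0 < ‖P.leadingCoeff‖ := norm_pos_iff.mpr (leadingCoeff_ne_zero.mpr hP)
  refine ⟨‖P.leadingCoeff‖ / 2, by positivity, ?_⟩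
  have h0 : Tendsto (fun n : ℕ => (n : ℂ)⁻¹) atTop (𝓝 0) := tendsto_inv_atTop_nhds_zero_nat
  have h1 : Tendsto (fun n : ℕ => ‖P.reverse.eval ((n : ℂ)⁻¹)‖) atTop (𝓝 ‖P.leadingCoeff‖) := by
    have := ((P.reverse.continuous.tendsto 0).comp h0).norm
    rwa [← coeff_zero_eq_eval_zero, coeff_zero_reverse] at this
  filter_upwards [h1.eventually (lt_mem_nhds (half_lt_self hl)), eventually_gt_atTop 0]
    with n hn hpos
  have hne : (n : ℂ) ≠ 0 := by exact_mod_cast hpos.ne'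
  have : Invertible (n : ℂ) := invertibleOfNonzero hne
  have key := eval₂_reverse_mul_pow (RingHom.id ℂ) (n : ℂ) P
  rw [invOf_eq_inv, ← eval, ← eval] at key
  rw [← key, norm_mul, norm_pow, Complex.norm_natCast]
  gcongr

/-- The growth bound at an infinite place, obtained from the complex one because the
embedding attached to `w` is injective and hence preserves the degree of `B`. -/
lemma eventually_le_place_eval (K : Type*) [Field K] [NumberField K] (B : (𝓞 K)[X])
    (hB : B ≠ 0) (w : InfinitePlace K) :
    ∃ c : ℝ, 0 < c ∧ ∀ᶠ n : ℕ in atTop,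
      c * (n : ℝ) ^ B.natDegree ≤ w (algebraMap (𝓞 K) K (B.eval (n : 𝓞 K))) := by
  let φ : 𝓞 K →+* ℂ := w.embedding.comp (algebraMap (𝓞 K) K)
  have hφ : Function.Injective φ :=
    w.embedding.injective.comp (FaithfulSMul.algebraMap_injective (𝓞 K) K)
  obtain ⟨c, hc, h⟩ := eventually_le_norm_eval (B.map φ) ((Polynomial.map_ne_zero_iff hφ).mpr hB)
  refine ⟨c, hc, h.mono fun n hn => ?_⟩
  rw [natDegree_map_eq_of_injective hφ, eval_natCast_map] at hn
  rwa [← InfinitePlace.norm_embedding_eq]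

/-- A Bézout identity over the fraction field, with denominators cleared. -/
lemma exists_integral_bezout (R K : Type*) [CommRing R] [IsDomain R] [Field K] [Algebra R K]
    [IsFractionRing R K] (A B : R[X])
    (hcop : IsCoprime (A.map (algebraMap R K)) (B.map (algebraMap R K))) :
    ∃ (U V : R[X]) (r : R), r ≠ 0 ∧ U * A + V * B = C r := by
  obtain ⟨u, v, huv⟩ := hcop
  obtain ⟨b, hbM, hb⟩ := IsLocalization.integerNormalization_spec (nonZeroDivisors R) u
  obtain ⟨b', hbM', hb'⟩ := IsLocalization.integerNormalization_spec (nonZeroDivisors R) v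
  set U := IsLocalization.integerNormalization (nonZeroDivisors R) u
  set V := IsLocalization.integerNormalization (nonZeroDivisors R) v
  refine ⟨C b' * U, C b * V, b * b',
    mul_ne_zero (nonZeroDivisors.ne_zero hbM) (nonZeroDivisors.ne_zero hbM'), ?_⟩
  apply map_injective _ (IsFractionRing.injective R K)
  have e : ∀ (x : R) (p : K[X]), x • p = C (algebraMap R K x) * p := fun x p => by
    rw [← smul_eq_C_mul, algebraMap_smul]
  rw [e] at hb hb'
  simp only [Polynomial.map_add, Polynomial.map_mul, Polynomial.map_C, hb, hb', map_mul]
  linear_combination (C (algebraMap R K b) * C (algebraMap R K b')) * huv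

/-- A nonzero algebraic integer has absolute value at least `1` at some infinite place. -/
lemma exists_one_le_place (K : Type*) [Field K] [NumberField K] (s : 𝓞 K) (hs : s ≠ 0) :
    ∃ w : InfinitePlace K, 1 ≤ w (s : K) := by
  by_contra! h
  obtain ⟨w⟩ : Nonempty (InfinitePlace K) := inferInstance
  exact (InfinitePlace.one_le_of_lt_one hs fun z _ => h z).not_gt (h w)

/-- If `d A(n) / B(n)` is integral then `B(n)` divides `d r`, where `r` is the constant of the
Bézout identity. -/
lemma eval_dvd_of_isIntegral (K : Type*) [Field K] [NumberField K] (A B U V : (𝓞 K)[X])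
    (r : 𝓞 K) (hr : U * A + V * B = C r) (x : 𝓞 K) (d : ℕ)
    (hx : algebraMap (𝓞 K) K (B.eval x) ≠ 0)
    (hd : IsIntegral ℤ ((d : K) * (algebraMap (𝓞 K) K (A.eval x) /
      algebraMap (𝓞 K) K (B.eval x)))) :
    B.eval x ∣ d * r := by
  have hdvd : B.eval x ∣ d * A.eval x := by
    obtain ⟨t, ht⟩ := (IsIntegralClosure.isIntegral_iff (A := 𝓞 K)).mp hd
    refine ⟨t, FaithfulSMul.algebraMap_injective (𝓞 K) K ?_⟩
    rw [map_mul, map_mul, map_natCast, ht]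
    field_simp
  have he : U.eval x * A.eval x + V.eval x * B.eval x = r := by
    simpa using congrArg (Polynomial.eval x) hr
  have hsplit : (d : 𝓞 K) * r = U.eval x * (d * A.eval x) + d * V.eval x * B.eval x := by
    rw [← he]; ring
  rw [hsplit]
  exact dvd_add (hdvd.mul_left _) (dvd_mul_left _ _)

/-- Let `K` be a number field with ring of integers `𝒪`, and let
`A, B ∈ 𝒪[z]` be coprime in `K[z]` with `B` nonconstant. Then there is `c > 0` such
that for all sufficiently large `n` (in particular `B(n) ≠ 0`),
`den(A(n)/B(n)) ≥ c n^{deg B}`. -/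
theorem denominator_growth_of_rational_values
    (K : Type*) [Field K] [NumberField K] (A B : Polynomial (𝓞 K))
    (hcop : IsCoprime (A.map (algebraMap (𝓞 K) K)) (B.map (algebraMap (𝓞 K) K)))
    (hB : 0 < B.natDegree) :
    ∃ c : ℝ, 0 < c ∧ ∃ N : ℕ, ∀ n : ℕ, N ≤ n →
      algebraMap (𝓞 K) K (B.eval (n : 𝓞 K)) ≠ 0 ∧
      c * (n : ℝ) ^ B.natDegree ≤
        (den K (algebraMap (𝓞 K) K (A.eval (n : 𝓞 K)) /
          algebraMap (𝓞 K) K (B.eval (n : 𝓞 K))) : ℝ) := by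
  obtain ⟨U, V, r, hr0, hr⟩ := exists_integral_bezout (𝓞 K) K A B hcop
  have hrK : (r : K) ≠ 0 := RingOfIntegers.coe_ne_zero_iff.mpr hr0
  choose c hc hgrow using eventually_le_place_eval K B (ne_zero_of_natDegree_gt hB)
  have hwr : ∀ w : InfinitePlace K, 0 < w (r : K) := fun w => InfinitePlace.pos_iff.mpr hrK
  obtain ⟨w₀, hw₀⟩ := Finite.exists_min fun w : InfinitePlace K => c w / w (r : K)
  refine ⟨c w₀ / w₀ (r : K), div_pos (hc w₀) (hwr w₀), ?_⟩
  rw [← eventually_atTop]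
  filter_upwards [eventually_all.mpr hgrow, eventually_gt_atTop 0] with n hn hpos
  have hnpos : (0 : ℝ) < n := by exact_mod_cast hpos
  have hBn : algebraMap (𝓞 K) K (B.eval (n : 𝓞 K)) ≠ 0 := by
    refine InfinitePlace.pos_iff.mp (lt_of_lt_of_le ?_ (hn w₀))
    have := hc w₀
    positivity
  refine ⟨hBn, ?_⟩
  obtain ⟨hdpos, hdint⟩ := den_spec K (algebraMap (𝓞 K) K (A.eval (n : 𝓞 K)) /
    algebraMap (𝓞 K) K (B.eval (n : 𝓞 K)))
  set d := den K (algebraMap (𝓞 K) K (A.eval (n : 𝓞 K)) /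
    algebraMap (𝓞 K) K (B.eval (n : 𝓞 K)))
  obtain ⟨s, hs⟩ := eval_dvd_of_isIntegral K A B U V r hr n d hBn hdint
  have hs0 : s ≠ 0 := by
    rintro rfl
    rw [mul_zero] at hs
    exact mul_ne_zero (Nat.cast_ne_zero.mpr hdpos.ne') hr0 hs
  obtain ⟨w, hw⟩ := exists_one_le_place K s hs0
  have hval : (d : ℝ) * w (r : K) = w (algebraMap (𝓞 K) K (B.eval (n : 𝓞 K))) * w (s : K) := by
    have h := congrArg (fun x => w (algebraMap (𝓞 K) K x)) hs
    simp only [map_mul, map_natCast] at h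
    rwa [← InfinitePlace.norm_embedding_eq w (d : K), map_natCast, Complex.norm_natCast] at h
  calc c w₀ / w₀ (r : K) * (n : ℝ) ^ B.natDegree
      ≤ c w / w (r : K) * (n : ℝ) ^ B.natDegree :=
        mul_le_mul_of_nonneg_right (hw₀ w) (by positivity)
    _ = c w * (n : ℝ) ^ B.natDegree / w (r : K) := by ring
    _ ≤ d := by
      rw [div_le_iff₀ (hwr w), hval]
      exact (hn w).trans (le_mul_of_one_le_right (apply_nonneg w _) hw)
end
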